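/- arXiv:1201.4032 — 2 statements merged into one kernel-verified Lean document; each statement's English description precedes it below -/
import Mathlib

section
/- (Theorem 2.3) Let n be an odd natural number, let h₁,…,h_{n+1} be distinct positive real numbers that are linearly independent over ℚ (e.g. members of a Hamel basis of ℝ over ℚ), and let a : ℝ → ℝ be an additive function with a(h₁) = −1 and a(h₂) = ⋯ = a(h_{n+1}) = 1. Then the function f : ℝ → ℝ given by f(x) = (a(x))₊ⁿ is n-Jensen-convex but is not n-Wright-convex. -/
/-!
For a truncated power `t₊ⁿ` and a step `k > 0`, the difference `Δ_k^{n+1} t₊ⁿ` is a multiple of the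
cardinal B-spline of degree `n`, hence nonnegative. This is proved by the Cox–de Boor recursion:
`t₊ⁿ⁺¹ = t · t₊ⁿ` and the Leibniz rule give
`Δ_k^{n+2} t₊ⁿ⁺¹ (y) = (y + (n+2)k) · Δ_k^{n+1} t₊ⁿ (y+k) - y · Δ_k^{n+1} t₊ⁿ (y)`
(`fwdDiff_iter_id_mul`), where the coefficients `y + (n+2)k` and `-y` are nonnegative on the support
(`bspline_props`).

Since `a` is additive, `Δ_h^{n+1} f(x)` is the difference of `t₊ⁿ` at `a x` with step `a h`.
The step `a h` can have any sign, but `n + 1` is even, so reversing the order of the nodes changes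
`a h` to `-a h` without changing the value. This gives Jensen convexity.

For the failure of Wright convexity, take the increments `h₁, …, h_{n+1}` and the point
`x = (n-1) h₁`. Then `a (x + ∑_{i ∈ S} hᵢ) ≤ 0` unless `S` is the complement of `{1}`, where the
value is `1`; that term carries the sign `-1`, and the whole difference equals `-1`.
-/

open Finset

noncomputable section

/-- Iterated forward difference `Δ_{h₁…h_m} f(x) = ∑_{S⊆{1,…,m}} (−1)^{m−|S|} f(x + ∑_{i∈S} hᵢ)`. -/
def fwdDiffIter (m : ℕ) (h : Fin m → ℝ) (f : ℝ → ℝ) (x : ℝ) : ℝ :=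
  ∑ S : Finset (Fin m), (-1 : ℝ) ^ (m - S.card) * f (x + ∑ i ∈ S, h i)

/-- Equal-increment forward difference `Δ_h^m f(x) = ∑_{i=0}^m (−1)^{m−i} C(m,i) f(x + i·h)`. -/
def fwdDiffEq (m : ℕ) (h : ℝ) (f : ℝ → ℝ) (x : ℝ) : ℝ :=
  ∑ i ∈ Finset.range (m + 1), (-1 : ℝ) ^ (m - i) * (m.choose i : ℝ) * f (x + (i : ℝ) * h)

/-- `f` is `n`-Jensen-convex if `Δ_h^{n+1} f(x) ≥ 0` for all `x` and all `h > 0`. -/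
def JensenConvexOrder (n : ℕ) (f : ℝ → ℝ) : Prop :=
  ∀ x : ℝ, ∀ h : ℝ, 0 < h → 0 ≤ fwdDiffEq (n + 1) h f x

/-- `f` is `n`-Wright-convex if `Δ_{h₁…h_{n+1}} f(x) ≥ 0` for all `x` and all positive increments. -/
def WrightConvexOrder (n : ℕ) (f : ℝ → ℝ) : Prop :=
  ∀ x : ℝ, ∀ h : Fin (n + 1) → ℝ, (∀ i, 0 < h i) → 0 ≤ fwdDiffIter (n + 1) h f x

/-- Leibniz rule for the iterated difference of `t ↦ t * g t`, in the form of the Cox–de Boor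
recursion. -/
lemma fwdDiff_iter_id_mul (k : ℝ) (g : ℝ → ℝ) (m : ℕ) (y : ℝ) :
    (fwdDiff k)^[m + 1] (fun t => t * g t) y
      = (y + (m + 1) * k) * (fwdDiff k)^[m] g (y + k) - y * (fwdDiff k)^[m] g y := by
  induction m generalizing y with
  | zero => simp [fwdDiff]
  | succ m ih =>
    rw [Function.iterate_succ_apply', fwdDiff, ih, ih, Function.iterate_succ_apply', fwdDiff,
      fwdDiff]
    push_cast
    ring

/-- The truncated power `t₊ⁿ`, with the convention `t₊⁰ = 1` exactly for `t ≥ 0`. This convention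
makes the B-spline recursion start at `n = 0`. -/
def truncPow (n : ℕ) (t : ℝ) : ℝ := if 0 ≤ t then t ^ n else 0

lemma truncPow_succ (n : ℕ) : truncPow (n + 1) = fun t => t * truncPow n t := by
  funext t
  unfold truncPow
  split_ifs <;> ring

lemma truncPow_eq_max {n : ℕ} (hn : n ≠ 0) (t : ℝ) : truncPow n t = max t 0 ^ n := by
  unfold truncPow
  split_ifs with ht
  · rw [max_eq_left ht]
  · rw [max_eq_right (not_le.mp ht).le, zero_pow hn]

/-- Positivity and support of the B-spline `Δ_k^{n+1} t₊ⁿ`; the support is needed in the induction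
because the recursion has a coefficient of the wrong sign outside it. -/
lemma bspline_props {k : ℝ} (hk : 0 < k) (n : ℕ) (y : ℝ) :
    0 ≤ (fwdDiff k)^[n + 1] (truncPow n) y ∧
      (0 ≤ y → (fwdDiff k)^[n + 1] (truncPow n) y = 0) ∧
      (y < -((n + 1) * k) → (fwdDiff k)^[n + 1] (truncPow n) y = 0) := by
  induction n generalizing y with
  | zero =>
    simp only [zero_add, Function.iterate_one, fwdDiff, truncPow, pow_zero, Nat.cast_zero, one_mul]
    refine ⟨?_, ?_, ?_⟩
    · split_ifs <;> linarith
    · intro hy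
      rw [if_pos (by linarith), if_pos hy, sub_self]
    · intro hy
      rw [if_neg (by linarith), if_neg (by linarith), sub_self]
  | succ n ih =>
    obtain ⟨p₁, r₁, l₁⟩ := ih (y + k)
    obtain ⟨p₀, r₀, l₀⟩ := ih y
    have hR : 0 ≤ y → (fwdDiff k)^[n + 1 + 1] (truncPow (n + 1)) y = 0 := by
      intro hy
      rw [truncPow_succ, fwdDiff_iter_id_mul, r₀ hy, r₁ (by linarith)]
      ring
    have hL : y < -(((n + 1 : ℕ) + 1) * k) → (fwdDiff k)^[n + 1 + 1] (truncPow (n + 1)) y = 0 := by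
      intro hy
      push_cast at hy
      rw [truncPow_succ, fwdDiff_iter_id_mul, l₀ (by linarith), l₁ (by linarith)]
      ring
    refine ⟨?_, hR, hL⟩
    by_cases hy : 0 ≤ y
    · exact (hR hy).ge
    by_cases hy' : y < -(((n + 1 : ℕ) + 1) * k)
    · exact (hL hy').ge
    push Not at hy hy'
    rw [truncPow_succ, fwdDiff_iter_id_mul]
    have h₁ := mul_nonneg (by linarith : 0 ≤ y + ((n + 1 : ℕ) + 1) * k) p₁
    have h₀ := mul_nonneg (by linarith : 0 ≤ -y) p₀
    linarith

lemma sum_truncated_nonneg {n : ℕ} (hn : n ≠ 0) {k : ℝ} (hk : 0 < k) (y : ℝ) :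
    0 ≤ ∑ i ∈ Finset.range (n + 1 + 1),
      (-1 : ℝ) ^ (n + 1 - i) * ((n + 1).choose i : ℝ) * max (y + i * k) 0 ^ n := by
  have h := (bspline_props hk n y).1
  rw [fwdDiff_iter_eq_sum_shift] at h
  refine h.trans_eq (Finset.sum_congr rfl fun i _ => ?_)
  rw [truncPow_eq_max hn, nsmul_eq_mul, zsmul_eq_mul]
  push_cast
  rfl

/-- For odd `n` the sign of the step does not matter, because the coefficients of the difference of
even order `n + 1` are symmetric. -/
lemma sum_truncated_nonneg_of_odd {n : ℕ} (hn : Odd n) (k y : ℝ) :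
    0 ≤ ∑ i ∈ Finset.range (n + 1 + 1),
      (-1 : ℝ) ^ (n + 1 - i) * ((n + 1).choose i : ℝ) * max (y + i * k) 0 ^ n := by
  have hn0 : n ≠ 0 := hn.pos.ne'
  rcases lt_trichotomy k 0 with hk | rfl | hk
  · rw [← Finset.sum_range_reflect]
    refine (sum_truncated_nonneg hn0 (neg_pos.mpr hk) (y + (n + 1) * k)).trans_eq
      (Finset.sum_congr rfl fun i hi => ?_)
    have hi' : i ≤ n + 1 := Nat.lt_succ_iff.mp (Finset.mem_range.mp hi)
    have e : n + 1 + 1 - 1 - i = n + 1 - i := by omega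
    have hs : (-1 : ℝ) ^ (n + 1 - i) = (-1 : ℝ) ^ i := by
      have h1 : (-1 : ℝ) ^ (n + 1 - i) * (-1 : ℝ) ^ i = 1 := by
        rw [← pow_add, Nat.sub_add_cancel hi', hn.add_one.neg_one_pow]
      have h2 : (-1 : ℝ) ^ i * (-1 : ℝ) ^ i = 1 := by
        rw [← mul_pow]; norm_num
      exact mul_right_cancel₀ (pow_ne_zero i (by norm_num)) (h1.trans h2.symm)
    rw [e, Nat.choose_symm hi', Nat.sub_sub_self hi', hs, Nat.cast_sub hi']
    push_cast
    ring_nf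
  · -- a zero step leaves the alternating sum of binomial coefficients, which is `(1 - 1)^{n+1}`
    have h0 : ∑ i ∈ Finset.range (n + 1 + 1),
        (-1 : ℝ) ^ (n + 1 - i) * ((n + 1).choose i : ℝ) = 0 := by
      have := add_pow (1 : ℝ) (-1) (n + 1)
      simpa using this.symm
    simp only [mul_zero, add_zero]
    rw [← Finset.sum_mul, h0, zero_mul]
  · exact sum_truncated_nonneg hn0 hk y

/-- Theorem 2.3: for odd `n`, distinct positive reals `h₁,…,h_{n+1}` which are
linearly independent over `ℚ`, and an additive `a` with `a(h₁) = −1`, `a(h₂) = ⋯ = a(h_{n+1}) = 1`,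
the function `f(x) = (a(x))₊ⁿ` is `n`-Jensen-convex but not `n`-Wright-convex. -/
theorem jensenConvex_not_wrightConvex (n : ℕ) (hn : Odd n) (h : Fin (n + 1) → ℝ)
    (hdist : Function.Injective h) (hpos : ∀ i, 0 < h i)
    (hli : LinearIndependent ℚ h)
    (a : ℝ → ℝ) (ha : ∀ x y : ℝ, a (x + y) = a x + a y)
    (ha1 : a (h 0) = -1) (ha2 : ∀ i : Fin (n + 1), i ≠ 0 → a (h i) = 1) :
    JensenConvexOrder n (fun x : ℝ => (max (a x) 0) ^ n) ∧
      ¬ WrightConvexOrder n (fun x : ℝ => (max (a x) 0) ^ n) := by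
  have hn0 : n ≠ 0 := hn.pos.ne'
  let A : ℝ →+ ℝ := AddMonoidHom.mk' a ha
  have hA : ∀ x, a x = A x := fun _ => rfl
  have hmul : ∀ (i : ℕ) (t : ℝ), a (i * t) = i * a t := fun i t => by
    rw [hA, ← nsmul_eq_mul, map_nsmul, nsmul_eq_mul, hA]
  constructor
  · intro x t _
    have := sum_truncated_nonneg_of_odd hn (a t) (a x)
    simpa only [fwdDiffEq, ha, hmul] using this
  · intro hW
    have hlt := hW (((n - 1 : ℕ) : ℝ) * h 0) h hpos
    unfold fwdDiffIter at hlt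
    have hsum : ∀ S : Finset (Fin (n + 1)), a (((n - 1 : ℕ) : ℝ) * h 0 + ∑ i ∈ S, h i)
        = 1 - n + ((S.erase 0).card - if 0 ∈ S then 1 else 0) := by
      intro S
      have hT : ∑ i ∈ S.erase 0, a (h i) = (S.erase 0).card := by
        rw [Finset.sum_congr rfl fun i hi => ha2 i (Finset.ne_of_mem_erase hi)]
        simp
      have hS : a (∑ i ∈ S, h i) = (S.erase 0).card - if 0 ∈ S then 1 else 0 := by
        rw [hA, map_sum]
        change ∑ i ∈ S, a (h i) = _
        split_ifs with h0
        · rw [← Finset.sum_erase_add _ _ h0, hT, ha1]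
          ring
        · rw [sub_zero, ← hT, Finset.erase_eq_of_notMem h0]
      rw [ha, hmul, hS, ha1, Nat.cast_sub hn.pos]
      push_cast
      ring
    have hle : ∀ S : Finset (Fin (n + 1)), (S.erase 0).card ≤ n := fun S => by
      simpa using Finset.card_le_card (Finset.erase_subset_erase 0 (Finset.subset_univ S))
    rw [Finset.sum_eq_single (Finset.univ.erase 0)] at hlt
    · simp only [hsum] at hlt
      norm_num at hlt
    · intro S _ hS
      -- `a` is at most `0` at the other vertices: either `0 ∈ S`, or `S` misses another index
      have hneg : (1 : ℝ) - n + ((S.erase 0).card - if 0 ∈ S then 1 else 0) ≤ 0 := by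
        split_ifs with h0
        · have : ((S.erase 0).card : ℝ) ≤ n := by exact_mod_cast hle S
          linarith
        · have hlt' : (S.erase 0).card < n := by
            rw [Finset.erase_eq_of_notMem h0]
            have hss : S ⊂ Finset.univ.erase 0 :=
              lt_of_le_of_ne (fun i hi => Finset.mem_erase.mpr
                ⟨fun e => h0 (e ▸ hi), Finset.mem_univ i⟩) hS
            simpa using Finset.card_lt_card hss
          have : ((S.erase 0).card : ℝ) + 1 ≤ n := by exact_mod_cast hlt'
          linarith
      simp only [hsum]
      rw [max_eq_right hneg, zero_pow hn0, mul_zero]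
    · intro hmem
      exact absurd (Finset.mem_univ _) hmem
end
end

section
/- (Theorem 4.5, including formula (4.10)) Let n ≥ 1, let h₁,…,h_{n+1} be distinct positive real numbers that are linearly independent over ℚ, and let a : ℝ → ℝ be an additive function with a(h₁) = −1 and a(h₂) = ⋯ = a(h_{n+1}) = 1. For i = 1,…,n+1 let μ_i = ∑_{(j₁,…,j_{n+1})∈ℕ^{n+1}} δ_{h_i + j₁h₁+⋯+j_{n+1}h_{n+1}}, and for x ∈ ℝ set μ(x) = ∑_{i=2}^{n+1} μ_i({x}) − μ₁({x}). Let A_i = { h_i + ∑_{j≠i} ε_j h_j : ε_j ∈ {0,1} } and A = A₁ ∪ ⋯ ∪ A_{n+1}. Then a(x) = μ(x) for every x ∈ A, and consequently the function f(x) = (a(x))₊ⁿ satisfies f(x) = (μ(x) + δ_{h₁}({x}))ⁿ for every x ∈ A. -/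
open MeasureTheory Finset

/-!
Every point of `A` is `x = ∑ k, c k * h k` with `c k ∈ {0, 1}` and `c ≠ 0`, and by linear
independence over `ℚ` this is its only representation with coefficients in `ℕ`. The mass
`μᵢ({x})` counts the `j ∈ ℕⁿ⁺¹` with `eᵢ + j = c`, so it equals `c i`; hence
`μ(x) = ∑_{i ≠ 0} c i - c 0`, which is `a x` by additivity. This integer is negative only when
`c 0 = 1` and all other coefficients vanish, that is, when `x = h 0`; there it equals `-1`, and
the extra Dirac mass replaces it by its positive part `0`.
-/

/-- Uniqueness of the representation of a real as an `ℕ`-combination of the `h k`. -/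
lemma natComb_injective {m : ℕ} {h : Fin m → ℝ} (hli : LinearIndependent ℚ h)
    {c d : Fin m → ℕ} (e : ∑ k, (c k : ℝ) * h k = ∑ k, (d k : ℝ) * h k) : c = d := by
  have key := Fintype.linearIndependent_iff.1 hli (fun k => (c k : ℚ) - (d k : ℚ)) (by
    simp only [Rat.smul_def, Rat.cast_sub, Rat.cast_natCast, sub_mul, Finset.sum_sub_distrib]
    exact sub_eq_zero.2 e)
  funext k
  have hk := sub_eq_zero.1 (key k)
  exact_mod_cast hk

lemma natComb_add_single {m : ℕ} (h : Fin m → ℝ) (i : Fin m) (j : Fin m → ℕ) :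
    h i + ∑ k, (j k : ℝ) * h k = ∑ k, ((j + Pi.single i 1 : Fin m → ℕ) k : ℝ) * h k := by
  simp [Pi.single_apply, add_mul, Finset.sum_add_distrib, add_comm]

/-- For 0-1 coefficients `c`, the only possible `j` with `eᵢ + j = c` is `c - eᵢ`, and it exists
exactly when `c i = 1`. -/
lemma sum_dirac_singleton {m : ℕ} {h : Fin m → ℝ} (hli : LinearIndependent ℚ h)
    {c : Fin m → ℕ} (hc : ∀ k, c k ≤ 1) (i : Fin m) :
    ((Measure.sum (fun j : Fin m → ℕ => Measure.dirac (h i + ∑ k, (j k : ℝ) * h k)))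
      {∑ k, (c k : ℝ) * h k}).toReal = c i := by
  rw [Measure.sum_apply _ (measurableSet_singleton _)]
  have hj : ∀ j : Fin m → ℕ, h i + ∑ k, (j k : ℝ) * h k = ∑ k, (c k : ℝ) * h k ↔
      j + Pi.single i 1 = c := by
    intro j
    rw [natComb_add_single]
    exact ⟨fun e => natComb_injective hli e, fun e => by rw [e]⟩
  have hterm : ∀ j : Fin m → ℕ, (Measure.dirac (h i + ∑ k, (j k : ℝ) * h k))
      {∑ k, (c k : ℝ) * h k} = if j + Pi.single i 1 = c then 1 else 0 := by
    intro j
    rw [Measure.dirac_apply' _ (measurableSet_singleton _)]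
    simp only [Set.indicator_apply, Set.mem_singleton_iff, hj, Pi.one_apply]
  simp only [hterm]
  rcases Nat.le_one_iff_eq_zero_or_eq_one.1 (hc i) with h0 | h1
  · have hne : ∀ j : Fin m → ℕ, j + Pi.single i 1 ≠ c := by
      intro j e
      have := congrFun e i
      simp [h0] at this
    simp [hne, h0]
  · rw [tsum_eq_single (c - Pi.single i 1)]
    · have : c - Pi.single i 1 + Pi.single i 1 = c := by
        funext k
        by_cases hk : k = i
        · subst hk; simp [h1]
        · simp [hk]
      simp [this, h1]
    · intro j hne
      rw [if_neg]
      rintro rfl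
      exact hne (by simp)

/-- Theorem 4.5, including formula (4.10): with the measures `μᵢ`, the signed
point function `μ(x) = ∑_{i=2}^{n+1} μᵢ({x}) − μ₁({x})` and the set `A = A₁ ∪ ⋯ ∪ A_{n+1}`,
for the additive `a` with `a(h₁) = −1`, `a(h₂) = ⋯ = a(h_{n+1}) = 1` one has `a(x) = μ(x)`
on `A`, and consequently `f(x) = (a(x))₊ⁿ` satisfies `f(x) = (μ(x) + δ_{h₁}({x}))ⁿ` on `A`. -/
theorem additive_eq_mu_on_A (n : ℕ) (hn : 1 ≤ n) (h : Fin (n + 1) → ℝ)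
    (hdist : Function.Injective h) (hpos : ∀ i, 0 < h i)
    (hli : LinearIndependent ℚ h)
    (a : ℝ → ℝ) (ha : ∀ x y : ℝ, a (x + y) = a x + a y)
    (ha1 : a (h 0) = -1) (ha2 : ∀ i : Fin (n + 1), i ≠ 0 → a (h i) = 1)
    (μm : Fin (n + 1) → Measure ℝ)
    (hμm : ∀ i, μm i = Measure.sum (fun j : Fin (n + 1) → ℕ =>
      Measure.dirac (h i + ∑ k, (j k : ℝ) * h k)))
    (μr : ℝ → ℝ)
    (hμr : ∀ x : ℝ, μr x =
      (∑ i ∈ Finset.univ.erase (0 : Fin (n + 1)), (μm i {x}).toReal) - (μm 0 {x}).toReal)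
    (A : Fin (n + 1) → Set ℝ)
    (hA : ∀ i, A i = {y : ℝ | ∃ ε : Fin (n + 1) → Bool,
      y = h i + ∑ j ∈ Finset.univ.erase i, (if ε j then h j else 0)}) :
    (∀ x ∈ ⋃ k, A k, a x = μr x) ∧
      (∀ x ∈ ⋃ k, A k,
        (max (a x) 0) ^ n = (μr x + (Measure.dirac (h 0) {x}).toReal) ^ n) := by
  classical
  let α : ℝ →+ ℝ := AddMonoidHom.mk' a ha
  have ha_comb : ∀ c : Fin (n + 1) → ℕ, a (∑ k, (c k : ℝ) * h k) =
      (∑ i ∈ Finset.univ.erase (0 : Fin (n + 1)), (c i : ℝ)) - c 0 := by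
    intro c
    have h1 : a (∑ k, (c k : ℝ) * h k) = ∑ k, (c k : ℝ) * a (h k) := by
      change α _ = ∑ k, (c k : ℝ) * α (h k)
      simp only [← nsmul_eq_mul, map_sum, map_nsmul]
    rw [h1, ← Finset.sum_erase_add _ _ (Finset.mem_univ (0 : Fin (n + 1))), ha1,
      Finset.sum_congr rfl (g := fun i => (c i : ℝ))]
    · ring
    · intro i hi
      rw [ha2 i (Finset.ne_of_mem_erase hi), mul_one]
  have hrep : ∀ x ∈ ⋃ k, A k, ∃ c : Fin (n + 1) → ℕ,
      (∀ k, c k ≤ 1) ∧ (∃ k, c k = 1) ∧ x = ∑ k, (c k : ℝ) * h k := by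
    intro x hx
    obtain ⟨i, hi⟩ := Set.mem_iUnion.1 hx
    rw [hA] at hi
    obtain ⟨ε, rfl⟩ := hi
    refine ⟨fun k => if k = i then 1 else if ε k then 1 else 0, ?_, ⟨i, by simp⟩, ?_⟩
    · intro k
      dsimp only
      split_ifs <;> simp
    · rw [← Finset.add_sum_erase _ _ (Finset.mem_univ i)]
      congr 1
      · simp
      · refine Finset.sum_congr rfl fun j hj => ?_
        dsimp only
        rw [if_neg (Finset.ne_of_mem_erase hj)]
        split_ifs <;> simp
  have hmain : ∀ x ∈ ⋃ k, A k, a x = μr x := by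
    intro x hx
    obtain ⟨c, hc, -, rfl⟩ := hrep x hx
    rw [ha_comb, hμr]
    simp only [hμm, sum_dirac_singleton hli hc]
  refine ⟨hmain, fun x hx => ?_⟩
  rw [← hmain x hx]
  congr 1
  by_cases hx0 : x = h 0
  · subst hx0
    simp [ha1]
  · have hδ : (Measure.dirac (h 0) {x}) = 0 := by
      rw [Measure.dirac_apply' _ (measurableSet_singleton _)]
      simp [Ne.symm hx0]
    rw [hδ, ENNReal.toReal_zero, add_zero, max_eq_left]
    obtain ⟨c, hc, ⟨i, hi⟩, rfl⟩ := hrep x hx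
    rw [ha_comb, sub_nonneg]
    -- Away from `h 0`, some coefficient with nonzero index is `1`, and it dominates `c 0 ≤ 1`.
    have hex : ∃ j ≠ 0, c j = 1 := by
      by_contra! hno
      have hz : ∀ j ≠ 0, c j = 0 := fun j hj => by
        have := hc j
        have := hno j hj
        omega
      have hi0 : i = 0 := by
        by_contra hne
        exact hno i hne hi
      subst hi0
      apply hx0
      rw [Finset.sum_eq_single 0 (fun j _ hj => by simp [hz j hj]) (by simp), hi]
      simp
    obtain ⟨j, hj0, hj⟩ := hex
    calc (c 0 : ℝ) ≤ c j := by rw [hj]; exact_mod_cast hc 0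
      _ ≤ _ := Finset.single_le_sum (f := fun i => (c i : ℝ)) (fun _ _ => Nat.cast_nonneg _)
        (Finset.mem_erase.2 ⟨hj0, Finset.mem_univ j⟩)
end
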